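/- Let ρ be a density matrix with entropy E and spectral constants α and β as in the context, and assume α > 0. Then for every real r > 0 there exist constants δ_r < 1, C > 0 and n₀ ∈ ℕ such that for all n ≥ n₀, 𝒮(ρ^{⊗n}, δ_r) > C · 2^{nE + r·α√n}. -/

import Mathlib

open scoped BigOperators Classical ComplexOrder

/-- A density matrix: positive semidefinite with trace one. -/
def IsDensity {ι : Type*} [Fintype ι] [DecidableEq ι] (ρ : Matrix ι ι ℂ) : Prop :=
  ρ.PosSemidef ∧ ρ.trace = 1

/-- The trace distance `D(ρ,σ) = Tr|ρ−σ|`: the sum of the absolute values of the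
eigenvalues of the Hermitian matrix `ρ − σ` (no factor 1/2). -/
noncomputable def traceDist {ι : Type*} [Fintype ι] [DecidableEq ι]
    (ρ σ : Matrix ι ι ℂ) : ℝ :=
  if h : (ρ - σ).IsHermitian then ∑ i, |h.eigenvalues i| else 0

/-- The minimal dimension `𝒮(ρ,δ)` of a `δ`-significant subspace: the minimum rank of an
orthogonal projection `P` (`P = Pᴴ = P²`) with `Tr(Pρ) ≥ δ`. -/
noncomputable def sigDim {ι : Type*} [Fintype ι] [DecidableEq ι]
    (ρ : Matrix ι ι ℂ) (δ : ℝ) : ℕ :=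
  sInf {m : ℕ | ∃ P : Matrix ι ι ℂ,
    P.IsHermitian ∧ P * P = P ∧ δ ≤ ((P * ρ).trace).re ∧ P.rank = m}

/-- The `n`-fold Kronecker power of `ρ`, indexed by `Fin n → ι`. -/
noncomputable def kronPow {ι : Type*} (ρ : Matrix ι ι ℂ) (n : ℕ) :
    Matrix (Fin n → ι) (Fin n → ι) ℂ :=
  Matrix.of fun i j => ∏ k, ρ (i k) (j k)

/-- The rank-one matrix `|u⟩⟨u|`. -/
noncomputable def outer {ι : Type*} (u : ι → ℂ) : Matrix ι ι ℂ :=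
  Matrix.of fun i j => u i * starRingEnd ℂ (u j)

/-- The partial trace over the second subsystem. -/
noncomputable def ptraceB {A B : Type*} [Fintype B]
    (M : Matrix (A × B) (A × B) ℂ) : Matrix A A ℂ :=
  Matrix.of fun a a' => ∑ b, M (a, b) (a', b)

theorem trace_eq_rank_of_isHermitian_of_isIdempotentElem {m : Type*} [Fintype m] [DecidableEq m]
    {P : Matrix m m ℂ} (hP : P.IsHermitian) (hPP : P * P = P) : P.trace = P.rank := by
  have h01 (i : m) : hP.eigenvalues i = 0 ∨ hP.eigenvalues i = 1 :=
    IsIdempotentElem.spectrum_subset ℝ hPP (hP.eigenvalues_mem_spectrum_real i)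
  rw [hP.trace_eq_sum_eigenvalues, hP.rank_eq_card_non_zero_eigs, Fintype.card_subtype,
    Finset.card_filter, Nat.cast_sum]
  refine Finset.sum_congr rfl fun i _ ↦ ?_
  rcases h01 i with h | h <;> simp [h]

open Matrix in
theorem re_trace_mul_le_of_unitary {m : Type*} [Fintype m] [DecidableEq m]
    {P U : Matrix m m ℂ} (hP : P.IsHermitian) (hPP : P * P = P)
    (hU : Uᴴ * U = 1) {d : m → ℝ} (hd : ∀ i, 0 ≤ d i) {b : ℝ}
    (S : Finset m) (hb0 : 0 ≤ b) (hb : ∀ i ∈ S, d i ≤ b) :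
    (P * (U * diagonal (fun i ↦ (d i : ℂ)) * Uᴴ)).trace.re ≤ b * P.rank + ∑ i ∈ Sᶜ, d i := by
  have hU' : U * Uᴴ = 1 := mul_eq_one_comm.mp hU
  have psd {Q : Matrix m m ℂ} (hQ : Q.IsHermitian) (hQQ : Q * Q = Q) (i : m) :
      0 ≤ ((Uᴴ * Q * U) i i).re := by
    have : Q.PosSemidef := by
      have := posSemidef_conjTranspose_mul_self Q
      rwa [hQ.eq, hQQ] at this
    exact (Complex.le_def.1 ((this.conjTranspose_mul_mul_same U).diag_nonneg (i := i))).1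
  have h0 := psd hP hPP
  have h1 (i : m) : ((Uᴴ * P * U) i i).re ≤ 1 := by
    have := psd (Q := 1 - P) (isHermitian_one.sub hP)
      (by rw [sub_mul, mul_sub, mul_sub, hPP]; simp) i
    rw [mul_sub, sub_mul, mul_one, hU] at this
    simpa using this
  have hsum : ∑ i, ((Uᴴ * P * U) i i).re = P.rank := by
    have : (Uᴴ * P * U).trace = P.rank := by
      rw [trace_mul_comm, ← mul_assoc, hU', one_mul,
        trace_eq_rank_of_isHermitian_of_isIdempotentElem hP hPP]
    simpa [trace] using congrArg Complex.re this
  have htr : (P * (U * diagonal (fun i ↦ (d i : ℂ)) * Uᴴ)).trace.re =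
      ∑ i, ((Uᴴ * P * U) i i).re * d i := by
    rw [← mul_assoc, trace_mul_comm, ← mul_assoc, ← mul_assoc, trace, Complex.re_sum]
    refine Finset.sum_congr rfl fun i _ ↦ ?_
    rw [diag_apply, mul_diagonal, Complex.re_mul_ofReal]
  rw [htr, ← Finset.sum_add_sum_compl S, ← hsum, Finset.mul_sum]
  refine add_le_add ?_ (Finset.sum_le_sum fun i _ ↦ mul_le_of_le_one_left (hd i) (h1 i))
  calc ∑ i ∈ S, ((Uᴴ * P * U) i i).re * d i
      ≤ ∑ i ∈ S, b * ((Uᴴ * P * U) i i).re := Finset.sum_le_sum fun i hi ↦ by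
        rw [mul_comm b]; exact mul_le_mul_of_nonneg_left (hb i hi) (h0 i)
    _ ≤ _ := Finset.sum_le_sum_of_subset_of_nonneg (Finset.subset_univ S)
        fun i _ _ ↦ mul_nonneg hb0 (h0 i)

theorem kronPow_mul {ι : Type*} [Fintype ι] (A B : Matrix ι ι ℂ) (n : ℕ) :
    kronPow (A * B) n = kronPow A n * kronPow B n := by
  ext i j
  simp only [kronPow, Matrix.of_apply, Matrix.mul_apply, Finset.prod_univ_sum,
    Finset.prod_mul_distrib, Fintype.piFinset_univ]

theorem kronPow_conjTranspose {ι : Type*} (A : Matrix ι ι ℂ) (n : ℕ) :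
    kronPow A.conjTranspose n = (kronPow A n).conjTranspose := by
  ext i j
  simp [kronPow, Matrix.conjTranspose_apply]

theorem kronPow_diagonal {ι : Type*} [DecidableEq ι] (d : ι → ℂ) (n : ℕ) :
    kronPow (Matrix.diagonal d) n = Matrix.diagonal fun i : Fin n → ι ↦ ∏ k, d (i k) := by
  ext i j
  simp only [kronPow, Matrix.of_apply, Matrix.diagonal_apply]
  split_ifs with h
  · simp [h]
  · obtain ⟨k, hk⟩ := Function.ne_iff.1 h
    exact Finset.prod_eq_zero (Finset.mem_univ k) (if_neg hk)

theorem kronPow_one {ι : Type*} [DecidableEq ι] (n : ℕ) :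
    kronPow (1 : Matrix ι ι ℂ) n = 1 := by
  rw [← Matrix.diagonal_one, kronPow_diagonal]
  simp

open Matrix in
theorem exists_unitary_kronPow_eq {ι : Type*} [Fintype ι] [DecidableEq ι] {ρ : Matrix ι ι ℂ}
    (hρ : ρ.IsHermitian) (n : ℕ) :
    ∃ U : Matrix (Fin n → ι) (Fin n → ι) ℂ, Uᴴ * U = 1 ∧
      kronPow ρ n =
        U * diagonal (fun i ↦ ((∏ k, hρ.eigenvalues (i k) : ℝ) : ℂ)) * Uᴴ := by
  have hV : (hρ.eigenvectorUnitary : Matrix ι ι ℂ)ᴴ * hρ.eigenvectorUnitary = 1 :=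
    Unitary.coe_star_mul_self hρ.eigenvectorUnitary
  refine ⟨kronPow hρ.eigenvectorUnitary n, ?_, ?_⟩
  · rw [← kronPow_conjTranspose, ← kronPow_mul, hV, kronPow_one]
  · conv_lhs => rw [hρ.spectral_theorem, Unitary.conjStarAlgAut_apply, kronPow_mul, kronPow_mul,
      kronPow_diagonal, ← Unitary.coe_star, Unitary.coe_star, star_eq_conjTranspose,
      kronPow_conjTranspose]
    simp

open MeasureTheory ProbabilityTheory in
theorem gaussianReal_Ioi_pos (t : ℝ) : 0 < gaussianReal 0 1 (Set.Ioi t) := by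
  refine pos_iff_ne_zero.2 fun h ↦ ?_
  have := gaussianReal_absolutelyContinuous' 0 one_ne_zero h
  simp at this

open MeasureTheory ProbabilityTheory Filter in
theorem exists_pos_le_sum_prod_of_centered {ι : Type*} [Fintype ι] {p X : ι → ℝ}
    (hp : ∀ i, 0 ≤ p i) (hp1 : ∑ i, p i = 1) (hX0 : ∑ i, p i * X i = 0)
    (hX1 : ∑ i, p i * X i ^ 2 = 1) (t : ℝ) :
    ∃ c : ℝ, 0 < c ∧ ∀ᶠ n : ℕ in atTop,
      c ≤ ∑ i : Fin n → ι with t * √n < ∑ k, X (i k), ∏ k, p (i k) := by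
  let _ : MeasurableSpace ι := ⊤
  let q : PMF ι := PMF.ofFintype (fun i ↦ ENNReal.ofReal (p i)) (by
    rw [← ENNReal.ofReal_sum_of_nonneg fun i _ ↦ hp i, hp1, ENNReal.ofReal_one])
  let μ : Measure ι := q.toMeasure
  have hμ (i : ι) : μ {i} = ENNReal.ofReal (p i) :=
    q.toMeasure_apply_singleton i (measurableSet_singleton i)
  have hint (f : ι → ℝ) : ∫ i, f i ∂μ = ∑ i, p i * f i := by
    simp [μ, PMF.integral_eq_sum, q, hp]
  let Q : Measure (ℕ → ι) := Measure.infinitePi fun _ ↦ μ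
  let Z : ℕ → (ℕ → ι) → ℝ := fun k ω ↦ X (ω k)
  have hXm : Measurable X := measurable_of_finite X
  have hmp (k : ℕ) : MeasurePreserving (Function.eval k) Q μ :=
    measurePreserving_eval_infinitePi (fun _ ↦ μ) k
  have hZm (k : ℕ) : Measurable (Z k) := hXm.comp (measurable_pi_apply k)
  have hZint (f : ι → ℝ) (k : ℕ) : ∫ ω, f (ω k) ∂Q = ∑ i, p i * f i := by
    rw [← hint, ← (hmp k).map_eq, integral_map (hmp k).measurable.aemeasurable
      (measurable_of_finite f).aestronglyMeasurable]
  have hindep : iIndepFun (fun (k : ℕ) (ω : ℕ → ι) ↦ ω k) Q :=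
    iIndepFun_infinitePi (P := fun _ : ℕ ↦ μ) (X := fun _ i ↦ i) fun _ ↦ measurable_id
  have hident (k : ℕ) : IdentDistrib (Z k) (Z 0) Q Q := by
    have : IdentDistrib (Function.eval k) (Function.eval 0) Q Q :=
      ⟨(hmp k).aemeasurable, (hmp 0).aemeasurable, (hmp k).map_eq.trans (hmp 0).map_eq.symm⟩
    exact this.comp hXm
  have hclt := tendstoInDistribution_inv_sqrt_mul_sum (P := Q) (X := Z) (Y := id)
    (P' := gaussianReal 0 1) HasLaw.id ((hZint X 0).trans hX0)
    ((hZint (X · ^ 2) 0).trans hX1) (hindep.comp (fun _ ↦ X) fun _ ↦ hXm) hident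
  have hlim := ProbabilityMeasure.le_liminf_measure_open_of_tendsto hclt.tendsto
    (isOpen_Ioi (a := t))
  simp only [ProbabilityMeasure.coe_mk, Measure.map_id] at hlim
  obtain ⟨c, hc0, hc⟩ := exists_between (gaussianReal_Ioi_pos t)
  have hev := eventually_lt_of_lt_liminf (hc.trans_le hlim)
  have hctop : c ≠ ⊤ := (hc.trans_le prob_le_one).ne_top
  refine ⟨c.toReal, ENNReal.toReal_pos hc0.ne' hctop, ?_⟩
  filter_upwards [hev, eventually_gt_atTop 0] with n hn hn0
  let T : Finset (Fin n → ι) := {i | t * √n < ∑ k, X (i k)}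
  have hmap : Q.map (fun ω (k : Fin n) ↦ ω k) = Measure.pi fun _ : Fin n ↦ μ := by
    have := (iIndepFun_iff_map_fun_eq_pi_map (fun k : Fin n ↦ (hmp k).aemeasurable)).1
      (hindep.precomp Fin.val_injective)
    refine this.trans (congrArg Measure.pi (funext fun k ↦ (hmp k).map_eq))
  have hT : Q.map (fun ω ↦ (√n)⁻¹ * ∑ k ∈ Finset.range n, Z k ω) (Set.Ioi t) =
      ENNReal.ofReal (∑ i ∈ T, ∏ k, p (i k)) := by
    have hs : (0 : ℝ) < √n := by positivity
    rw [Measure.map_apply (by fun_prop) measurableSet_Ioi]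
    have : (fun ω ↦ (√n)⁻¹ * ∑ k ∈ Finset.range n, Z k ω) ⁻¹' Set.Ioi t =
        (fun (ω : ℕ → ι) (k : Fin n) ↦ ω k) ⁻¹' T := by
      ext ω
      simp [T, Z, Finset.sum_range, ← div_eq_inv_mul, lt_div_iff₀ hs]
    rw [this, ← Measure.map_apply (by fun_prop) T.measurableSet, hmap,
      ← sum_measure_singleton, ENNReal.ofReal_sum_of_nonneg
        fun i _ ↦ Finset.prod_nonneg fun k _ ↦ hp _]
    refine Finset.sum_congr rfl fun i _ ↦ ?_
    rw [Measure.pi_singleton, ENNReal.ofReal_prod_of_nonneg fun k _ ↦ hp _]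
    simp [hμ]
  rw [hT] at hn
  exact ENNReal.toReal_le_of_le_ofReal
    (Finset.sum_nonneg fun i _ ↦ Finset.prod_nonneg fun k _ ↦ hp _) hn.le

theorem prod_le_two_rpow_of_lt_sum {ι : Type*} {p : ι → ℝ} (hp : ∀ i, 0 ≤ p i) {E α r : ℝ}
    (hα : 0 < α) {n : ℕ} {i : Fin n → ι}
    (hi : r * √n < ∑ k, -(Real.logb 2 (p (i k)) + E) / α) :
    ∏ k, p (i k) ≤ (2 : ℝ) ^ (-(n * E + r * α * √n)) := by
  by_cases h : ∃ k, p (i k) = 0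
  · obtain ⟨k, hk⟩ := h
    rw [Finset.prod_eq_zero (Finset.mem_univ k) hk]
    positivity
  push Not at h
  have hpos (k : Fin n) : 0 < p (i k) := (hp _).lt_of_ne' (h k)
  rw [← Finset.sum_div, lt_div_iff₀ hα, Finset.sum_neg_distrib, Finset.sum_add_distrib] at hi
  simp only [Finset.sum_const, Finset.card_univ, Fintype.card_fin, nsmul_eq_mul] at hi
  rw [← Real.logb_le_iff_le_rpow one_lt_two (Finset.prod_pos fun k _ ↦ hpos k),
    Real.logb_prod _ _ fun k _ ↦ h k]
  linarith

theorem exists_isHermitian_rank_eq_sigDim {ι : Type*} [Fintype ι] [DecidableEq ι]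
    {ρ : Matrix ι ι ℂ} {δ : ℝ} (hδ : δ ≤ ρ.trace.re) :
    ∃ P : Matrix ι ι ℂ,
      P.IsHermitian ∧ P * P = P ∧ δ ≤ ((P * ρ).trace).re ∧ P.rank = sigDim ρ δ :=
  Nat.sInf_mem (s := {m : ℕ | ∃ P : Matrix ι ι ℂ,
      P.IsHermitian ∧ P * P = P ∧ δ ≤ ((P * ρ).trace).re ∧ P.rank = m})
    ⟨_, 1, Matrix.isHermitian_one, one_mul 1, by rwa [one_mul], rfl⟩

theorem trace_kronPow {ι : Type*} [Fintype ι] [DecidableEq ι] (A : Matrix ι ι ℂ) (n : ℕ) :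
    (kronPow A n).trace = A.trace ^ n := by
  simp only [Matrix.trace, kronPow, Matrix.diag_apply, Matrix.of_apply]
  rw [← Fin.prod_const, Finset.prod_univ_sum, Fintype.piFinset_univ]

/-- for a density matrix `ρ` with entropy `E` and spectral deviation `α > 0`,
for every `r > 0` there exist `δ_r < 1`, `C > 0` and `n₀` such that for all `n ≥ n₀`,
`𝒮(ρ^{⊗n}, δ_r) > C · 2^{nE + rα√n}`. -/
theorem sigDim_kronPow_lower_bound_general {ι : Type*} [Fintype ι] [DecidableEq ι] [Nonempty ι]
    (ρ : Matrix ι ι ℂ) (hρ : IsDensity ρ)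
    (E α β : ℝ)
    (hE : E = -∑ i, hρ.1.isHermitian.eigenvalues i *
        Real.logb 2 (hρ.1.isHermitian.eigenvalues i))
    (hα : α = Real.sqrt (∑ i, hρ.1.isHermitian.eigenvalues i *
        (Real.logb 2 (hρ.1.isHermitian.eigenvalues i) + E) ^ 2))
    (hβ : β = ∑ i, hρ.1.isHermitian.eigenvalues i *
        |Real.logb 2 (hρ.1.isHermitian.eigenvalues i) + E| ^ 3)
    (hαpos : 0 < α)
    (r : ℝ) (hr : 0 < r) :
    ∃ δr C : ℝ, ∃ n₀ : ℕ, δr < 1 ∧ 0 < C ∧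
      ∀ n : ℕ, n₀ ≤ n →
        C * (2 : ℝ) ^ ((n : ℝ) * E + r * α * Real.sqrt n) < (sigDim (kronPow ρ n) δr : ℝ) := by
  set p := hρ.1.isHermitian.eigenvalues
  have hp : ∀ i, 0 ≤ p i := hρ.1.eigenvalues_nonneg
  have hp1 : ∑ i, p i = 1 := by
    have := hρ.1.isHermitian.trace_eq_sum_eigenvalues.symm.trans hρ.2
    rw [← Complex.ofReal_inj, Complex.ofReal_sum, Complex.ofReal_one]
    exact this
  have hα2 : ∑ i, p i * (Real.logb 2 (p i) + E) ^ 2 = α ^ 2 := by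
    rw [hα, Real.sq_sqrt (Finset.sum_nonneg fun i _ ↦ mul_nonneg (hp i) (sq_nonneg _))]
  obtain ⟨c, hc, hev⟩ := exists_pos_le_sum_prod_of_centered (p := p)
    (X := fun i ↦ -(Real.logb 2 (p i) + E) / α) hp hp1
    (by
      simp only [mul_div_assoc', ← Finset.sum_div, mul_neg, mul_add, Finset.sum_neg_distrib,
        Finset.sum_add_distrib, ← Finset.sum_mul, hp1]
      rw [hE]
      simp)
    (by
      simp only [div_pow, neg_sq, mul_div_assoc', ← Finset.sum_div, hα2]
      exact div_self (by positivity)) r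
  obtain ⟨n₀, hn₀⟩ := Filter.eventually_atTop.1 hev
  refine ⟨1 - c / 2, c / 4, n₀, by linarith, by linarith, fun n hn ↦ ?_⟩
  have hcT := hn₀ n hn
  set T : Finset (Fin n → ι) := {i | r * √n < ∑ k, -(Real.logb 2 (p (i k)) + E) / α} with hT
  have htot : ∑ i : Fin n → ι, ∏ k, p (i k) = 1 := by
    rw [← Fintype.piFinset_univ, ← Finset.prod_univ_sum, hp1, Finset.prod_const_one]
  obtain ⟨P, hP, hPP, hδ, hrank⟩ := exists_isHermitian_rank_eq_sigDim (ρ := kronPow ρ n)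
    (δ := 1 - c / 2) (by rw [trace_kronPow, hρ.2]; simp; linarith)
  obtain ⟨U, hU, hUρ⟩ := exists_unitary_kronPow_eq hρ.1.isHermitian n
  rw [hUρ] at hδ
  have hle := hδ.trans (re_trace_mul_le_of_unitary hP hPP hU
    (fun i ↦ Finset.prod_nonneg fun k _ ↦ hp _) T
    (by positivity : 0 ≤ (2 : ℝ) ^ (-(n * E + r * α * √n)))
    fun i hi ↦ prod_le_two_rpow_of_lt_sum hp hαpos (by simpa [hT] using hi))
  rw [← hrank]
  rw [← Finset.sum_add_sum_compl T] at htot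
  rw [Real.rpow_neg zero_le_two, inv_mul_eq_div] at hle
  have hpow : 0 < (2 : ℝ) ^ (n * E + r * α * √n) := by positivity
  rw [← lt_div_iff₀ hpow]
  linarith
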